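/- arXiv:0910.1737 — 2 statements merged into one kernel-verified Lean document; each statement's English description precedes it below -/
import Mathlib

section
/- Let {A_m}, {B_m}, {C_m} be sequences of N×N real matrices and let {V_m}_{m∈ℕ} and {G_m}_{m∈ℕ} be sequences of N×N matrix polynomials satisfying, for all m ≥ 0, the recurrences x·V_m(x) = A_m·V_{m+1}(x) + B_m·V_m(x) + C_m·V_{m−1}(x) and z·G_m(z) = G_{m−1}(z)·A_{m−1} + G_m(z)·B_m + G_{m+1}(z)·C_{m+1}, with V_{−1} := 0 and G_{−1} := 0. Then for every m ∈ ℕ and every x the confluent formulas hold: (i) G_m(x)·A_m·V_{m+1}(x) − G_{m+1}(x)·C_{m+1}·V_m(x) = 0_{N×N}; (ii) Σ_{k=0}^m G_k(x)·V_k(x) = G_m(x)·A_m·V'_{m+1}(x) − G_{m+1}(x)·C_{m+1}·V'_m(x); and (iii) Σ_{k=0}^m G_k(x)·V_k(x) = G'_{m+1}(x)·C_{m+1}·V_m(x) − G'_m(x)·A_m·V_{m+1}(x), where ' denotes the derivative of a matrix polynomial. -/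
open Polynomial Matrix Finset

noncomputable section

abbrev Mat (N : ℕ) := Matrix (Fin N) (Fin N) ℝ

/-- `N×N` real matrix polynomials. -/
abbrev MatPoly (N : ℕ) := Polynomial (Mat N)

def UpperTri {N : ℕ} {R : Type*} [Zero R] (A : Matrix (Fin N) (Fin N) R) : Prop :=
  ∀ i j : Fin N, (j : ℕ) < (i : ℕ) → A i j = 0

def LowerTri {N : ℕ} {R : Type*} [Zero R] (A : Matrix (Fin N) (Fin N) R) : Prop :=
  ∀ i j : Fin N, (i : ℕ) < (j : ℕ) → A i j = 0

/-- Evaluation of a matrix polynomial at a real point. -/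
def MPeval {N : ℕ} (P : MatPoly N) (x : ℝ) : Mat N :=
  P.sum fun k A => x ^ k • A

/-!
Let `J` be the block Jacobi matrix with rows `(…, C m, B m, A m, …)`. The recurrences say
`J V = X V` and `G J = X G`. For arbitrary sequences, a partial sum of `h (J w) - (h J) w`
telescopes to a boundary term. With `h = G` and `w = V` the summands vanish because `X` is central,
which is (i). Since `J` is constant, differentiating gives `J V' = X V' + V` and `G' J = X G' + G`,
so the pairs `(G, V')` and `(G', V)` have summands `G V` and `-(G V)`, which are (ii) and (iii).
-/

section Tridiagonal

variable {S : Type*}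

/-- The column `J w`, where `J` is the semi-infinite tridiagonal matrix whose row `m` has the
entries `c m`, `b m`, `a m` in columns `m - 1`, `m`, `m + 1`; the entry `c 0` falls outside it. -/
def tridiagMulVec [NonUnitalNonAssocSemiring S] (a b c w : ℕ → S) (m : ℕ) : S :=
  a m * w (m + 1) + b m * w m + (if m = 0 then 0 else c m * w (m - 1))

/-- The row `h J`, where `J` is the tridiagonal matrix of `tridiagMulVec`. -/
def tridiagVecMul [NonUnitalNonAssocSemiring S] (a b c h : ℕ → S) (m : ℕ) : S :=
  (if m = 0 then 0 else h (m - 1) * a (m - 1)) + h m * b m + h (m + 1) * c (m + 1)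

/-- The bilinear concomitant of `h` and `w`: the boundary term in the discrete Green formula for
the tridiagonal matrix of `tridiagMulVec`. -/
def concomitant [NonUnitalNonAssocRing S] (a c h w : ℕ → S) (m : ℕ) : S :=
  h m * a m * w (m + 1) - h (m + 1) * c (m + 1) * w m

theorem sum_mul_tridiagMulVec_sub_tridiagVecMul_mul [NonUnitalRing S]
    (a b c h w : ℕ → S) (m : ℕ) :
    ∑ k ∈ range (m + 1), (h k * tridiagMulVec a b c w k - tridiagVecMul a b c h k * w k) =
      concomitant a c h w m := by
  induction m with
  | zero =>
    simp only [zero_add, sum_range_one, tridiagMulVec, tridiagVecMul, concomitant, if_true]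
    noncomm_ring
  | succ m ih =>
    rw [sum_range_succ, ih]
    simp only [tridiagMulVec, tridiagVecMul, concomitant, Nat.add_one_ne_zero, if_false,
      Nat.add_sub_cancel]
    noncomm_ring

theorem concomitant_eq_zero [NonUnitalRing S] {a b c h w : ℕ → S} {z : S}
    (hz : ∀ k, Commute z (h k))
    (hw : ∀ k, z * w k = tridiagMulVec a b c w k)
    (hh : ∀ k, z * h k = tridiagVecMul a b c h k) (m : ℕ) :
    concomitant a c h w m = 0 := by
  rw [← sum_mul_tridiagMulVec_sub_tridiagVecMul_mul a b c h w m]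
  refine sum_eq_zero fun k _ => ?_
  rw [← hw, ← hh, (hz k).eq, mul_assoc, sub_self]

end Tridiagonal

section Derivative

variable {R : Type*}

theorem derivative_tridiagMulVec_C [Semiring R] (a b c : ℕ → R) (V : ℕ → R[X]) (m : ℕ) :
    derivative (tridiagMulVec (C ∘ a) (C ∘ b) (C ∘ c) V m) =
      tridiagMulVec (C ∘ a) (C ∘ b) (C ∘ c) (derivative ∘ V) m := by
  simp only [tridiagMulVec, Function.comp_apply, derivative_add, derivative_C_mul,
    apply_ite derivative, derivative_zero]

theorem derivative_tridiagVecMul_C [Semiring R] (a b c : ℕ → R) (G : ℕ → R[X]) (m : ℕ) :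
    derivative (tridiagVecMul (C ∘ a) (C ∘ b) (C ∘ c) G m) =
      tridiagVecMul (C ∘ a) (C ∘ b) (C ∘ c) (derivative ∘ G) m := by
  simp only [tridiagVecMul, Function.comp_apply, derivative_add, derivative_mul, derivative_C,
    mul_zero, add_zero, apply_ite derivative, derivative_zero]

variable [Ring R] {a b c : ℕ → R} {V G : ℕ → R[X]}

theorem sum_mul_eq_concomitant_derivative_right
    (hV : ∀ m, X * V m = tridiagMulVec (C ∘ a) (C ∘ b) (C ∘ c) V m)
    (hG : ∀ m, X * G m = tridiagVecMul (C ∘ a) (C ∘ b) (C ∘ c) G m) (m : ℕ) :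
    ∑ k ∈ range (m + 1), G k * V k = concomitant (C ∘ a) (C ∘ c) G (derivative ∘ V) m := by
  rw [← sum_mul_tridiagMulVec_sub_tridiagVecMul_mul _ (C ∘ b)]
  refine sum_congr rfl fun k _ => ?_
  rw [← derivative_tridiagMulVec_C, ← hV, ← hG, derivative_mul, derivative_X, one_mul,
    X_mul (p := G k), Function.comp_apply]
  noncomm_ring

theorem sum_mul_eq_neg_concomitant_derivative_left
    (hV : ∀ m, X * V m = tridiagMulVec (C ∘ a) (C ∘ b) (C ∘ c) V m)
    (hG : ∀ m, X * G m = tridiagVecMul (C ∘ a) (C ∘ b) (C ∘ c) G m) (m : ℕ) :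
    ∑ k ∈ range (m + 1), G k * V k = -concomitant (C ∘ a) (C ∘ c) (derivative ∘ G) V m := by
  rw [← sum_mul_tridiagMulVec_sub_tridiagVecMul_mul _ (C ∘ b), ← sum_neg_distrib]
  refine sum_congr rfl fun k _ => ?_
  rw [← derivative_tridiagVecMul_C, ← hV, ← hG, derivative_mul, derivative_X, one_mul,
    X_mul (p := derivative (G k)), Function.comp_apply]
  noncomm_ring

end Derivative

section ScalarEvaluation

variable {K A : Type*} [CommSemiring K] [Semiring A] [Algebra K A]

/-- Evaluation of polynomials over a `K`-algebra `A`, possibly noncommutative, at a scalar of `K`.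
It is a ring homomorphism because scalars are central in `A`. -/
def scalarEval (x : K) : A[X] →+* A :=
  eval₂RingHom' (RingHom.id A) (algebraMap K A x) fun r => (Algebra.commutes x r).symm

theorem scalarEval_C (x : K) (r : A) : scalarEval x (C r) = r :=
  eval₂_C _ _

theorem scalarEval_eq_sum (x : K) (P : A[X]) : scalarEval x P = P.sum fun k r => x ^ k • r := by
  change P.eval₂ (RingHom.id A) (algebraMap K A x) = _
  simp only [eval₂_def, RingHom.id_apply, ← map_pow, ← Algebra.commutes, ← Algebra.smul_def]

end ScalarEvaluation

theorem MPeval_eq_scalarEval {N : ℕ} (P : MatPoly N) (x : ℝ) : MPeval P x = scalarEval x P :=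
  (scalarEval_eq_sum x P).symm

theorem statement13_general {R : Type*} [Ring R] {a b c : ℕ → R} {V G : ℕ → R[X]}
    (hV : ∀ m, X * V m = C (a m) * V (m + 1) + C (b m) * V m
      + (if m = 0 then 0 else C (c m) * V (m - 1)))
    (hG : ∀ m, X * G m = (if m = 0 then 0 else G (m - 1) * C (a (m - 1)))
      + G m * C (b m) + G (m + 1) * C (c (m + 1))) (m : ℕ) :
    (G m * C (a m) * V (m + 1) - G (m + 1) * C (c (m + 1)) * V m = 0) ∧
    (∑ k ∈ range (m + 1), G k * V k =
      G m * C (a m) * derivative (V (m + 1)) - G (m + 1) * C (c (m + 1)) * derivative (V m)) ∧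
    (∑ k ∈ range (m + 1), G k * V k =
      derivative (G (m + 1)) * C (c (m + 1)) * V m - derivative (G m) * C (a m) * V (m + 1)) :=
  ⟨concomitant_eq_zero (fun k => commute_X (G k)) hV hG m,
    sum_mul_eq_concomitant_derivative_right hV hG m,
    (sum_mul_eq_neg_concomitant_derivative_left hV hG m).trans (neg_sub _ _)⟩

theorem statement13
    (N : ℕ) (hN : 0 < N)
    (A B C : ℕ → Mat N) (V G : ℕ → MatPoly N)
    (hV : ∀ m : ℕ, X * V m = Polynomial.C (A m) * V (m + 1) + Polynomial.C (B m) * V m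
      + (if m = 0 then 0 else Polynomial.C (C m) * V (m - 1)))
    (hG : ∀ m : ℕ, X * G m =
      (if m = 0 then 0 else G (m - 1) * Polynomial.C (A (m - 1)))
      + G m * Polynomial.C (B m) + G (m + 1) * Polynomial.C (C (m + 1))) :
    ∀ (m : ℕ) (x : ℝ),
      -- (i) confluent formula
      (MPeval (G m) x * A m * MPeval (V (m + 1)) x
        - MPeval (G (m + 1)) x * C (m + 1) * MPeval (V m) x = 0) ∧
      -- (ii)
      (∑ k ∈ Finset.range (m + 1), MPeval (G k) x * MPeval (V k) x
        = MPeval (G m) x * A m * MPeval (Polynomial.derivative (V (m + 1))) x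
          - MPeval (G (m + 1)) x * C (m + 1) * MPeval (Polynomial.derivative (V m)) x) ∧
      -- (iii)
      (∑ k ∈ Finset.range (m + 1), MPeval (G k) x * MPeval (V k) x
        = MPeval (Polynomial.derivative (G (m + 1))) x * C (m + 1) * MPeval (V m) x
          - MPeval (Polynomial.derivative (G m)) x * A m * MPeval (V (m + 1)) x) := by
  intro m x
  simpa only [MPeval_eq_scalarEval, map_sub, map_mul, map_sum, map_zero, scalarEval_C] using
    (statement13_general hV hG m).imp (congrArg (scalarEval x))
      (And.imp (congrArg (scalarEval x)) (congrArg (scalarEval x)))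
end
end

section
/- Let V_m be an N×N matrix polynomial over ℂ of degree m with nonsingular leading coefficient, let x_{m,1}, …, x_{m,s} be the distinct zeros of det V_m, with multiplicities l_1, …, l_s, and assume that for each k the left and right null spaces of V_m(x_{m,k}) both have dimension l_k (so l_k ≤ N). Then for every N×N matrix polynomial V of degree ≤ m−1 and every t ∈ ℂ \ {x_{m,1},…,x_{m,s}} the partial fraction decomposition V(t)·(V_m(t))^{−1} = Σ_{k=1}^s C_{m,k}/(t − x_{m,k}) holds, where C_{m,k} = (l_k / (det V_m)^{(l_k)}(x_{m,k})) · V(x_{m,k}) · (Adj V_m)^{(l_k−1)}(x_{m,k}). -/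
open Polynomial Matrix

noncomputable section

/-- Iterated derivative of a polynomial. -/
def iterDeriv {R : Type*} [CommSemiring R] (l : ℕ) (q : Polynomial R) : Polynomial R :=
  (fun r => Polynomial.derivative r)^[l] q

/-- Evaluation of a matrix of polynomials at a point. -/
def evalMat {N : ℕ} (V : Matrix (Fin N) (Fin N) (Polynomial ℂ)) (t : ℂ) :
    Matrix (Fin N) (Fin N) ℂ :=
  V.map (Polynomial.eval t)

/-- The matrix `(Adj V)^{(l)}(a)`. -/
def adjDer {N : ℕ} (V : Matrix (Fin N) (Fin N) (Polynomial ℂ)) (l : ℕ) (a : ℂ) :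
    Matrix (Fin N) (Fin N) ℂ :=
  Matrix.of fun i j => Polynomial.eval a (iterDeriv l (V.adjugate i j))

/-!
If `Vm` has an `l`-dimensional null space at `a`, then up to invertible constant factors `l` of its
columns vanish at `a`, so `(X - a) ^ l` divides `det Vm`. Replacing a row costs at most one
dimension of the null space, so `(X - a) ^ (l - 1)` divides every entry of `Adj Vm`. When the
multiplicity of `a` in `det Vm` is exactly `l`, the entries of `V * Vm⁻¹ = V * Adj Vm / det Vm`
therefore have at most a simple pole at `a`. They vanish at infinity, because by Cramer's rule the
entries of `V * Adj Vm` are determinants of `Vm` with a row replaced by a row of `V`, which has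
smaller degree. Cancelling the common factor leaves a quotient with squarefree denominator, whose
partial fractions are Lagrange interpolation, and Leibniz' rule expresses the residues through
derivatives.
-/

section Residue

variable {R : Type*} [CommRing R]

theorem eval_iterate_derivative_X_sub_C_pow_mul (a : R) (n : ℕ) (q : R[X]) :
    (derivative^[n] ((X - C a) ^ n * q)).eval a = n.factorial * q.eval a := by
  rw [← coe_aeval_eq_eval, ← nsmul_eq_mul]
  exact aeval_iterate_derivative_self _ n a (by simp)

theorem eval_iterate_derivative_mul_of_dvd {a : R} {n : ℕ} {q : R[X]} (hq : (X - C a) ^ n ∣ q)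
    (f : R[X]) :
    (derivative^[n] (q * f)).eval a = (derivative^[n] q).eval a * f.eval a := by
  obtain ⟨g, rfl⟩ := hq
  rw [mul_assoc, eval_iterate_derivative_X_sub_C_pow_mul, eval_iterate_derivative_X_sub_C_pow_mul,
    eval_mul, mul_assoc]

theorem eval_iterate_derivative_succ_mul_of_dvd {a : R} {n : ℕ} {q f : R[X]}
    (hq : (X - C a) ^ n ∣ q) (hf : f.IsRoot a) :
    (derivative^[n + 1] (q * f)).eval a =
      (n + 1) * ((derivative^[n] q).eval a * (derivative f).eval a) := by
  obtain ⟨g, rfl⟩ := hq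
  obtain ⟨h, rfl⟩ := dvd_iff_isRoot.2 hf
  have hprod : (X - C a) ^ n * g * ((X - C a) * h) = (X - C a) ^ (n + 1) * (g * h) := by ring
  rw [hprod, eval_iterate_derivative_X_sub_C_pow_mul, eval_iterate_derivative_X_sub_C_pow_mul,
    derivative_mul, derivative_X_sub_C, Nat.factorial_succ]
  simp only [eval_add, eval_mul, eval_sub, eval_X, eval_C, eval_one, sub_self, zero_mul, add_zero]
  push_cast
  ring

theorem map_eval_iterate_derivative_mul_of_dvd {n o p : Type*} [Fintype n] {a : R} {r : ℕ}
    (V : Matrix o n R[X]) {A : Matrix n p R[X]} (hA : ∀ i j, (X - C a) ^ r ∣ A i j) :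
    (V * A).map (fun q => (derivative^[r] q).eval a) =
      V.map (eval a) * A.map fun q => (derivative^[r] q).eval a := by
  ext i j
  simp only [map_apply, mul_apply, iterate_derivative_sum, eval_finsetSum]
  refine Finset.sum_congr rfl fun u _ => ?_
  rw [mul_comm, eval_iterate_derivative_mul_of_dvd (hA u j), mul_comm]

end Residue

section PartialFractions

variable {K : Type*} [Field K]

theorem eval_div_eval_nodal_eq_sum {S : Finset K} {g : K[X]}
    (hg : g.degree < S.card) {t : K} (ht : t ∉ S) :
    g.eval t / (Lagrange.nodal S id).eval t =
      ∑ a ∈ S, (t - a)⁻¹ * (g.eval a / (derivative (Lagrange.nodal S id)).eval a) := by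
  classical
  have hne : ∀ a ∈ S, t ≠ id a := fun a ha h => ht (h ▸ ha)
  have hinterp := Lagrange.eval_interpolate_not_at_node (fun a => g.eval (id a)) hne
  rw [← Lagrange.eq_interpolate Function.injective_id.injOn hg] at hinterp
  rw [hinterp, mul_div_cancel_left₀ _ (Lagrange.eval_nodal_not_at_node hne)]
  refine Finset.sum_congr rfl fun a ha => ?_
  rw [Lagrange.nodalWeight_eq_eval_derivative_nodal ha, id_eq]
  ring

theorem div_eval_iterate_derivative_mul_cancel_left {a : K} {n : ℕ} {q f : K[X]}
    (hq : (X - C a) ^ n ∣ q) (hf : f.IsRoot a) (hne : (derivative^[n + 1] (q * f)).eval a ≠ 0)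
    (g : K[X]) :
    ((n + 1 : ℕ) : K) / (derivative^[n + 1] (q * f)).eval a * (derivative^[n] (q * g)).eval a =
      g.eval a / (derivative f).eval a := by
  rw [eval_iterate_derivative_succ_mul_of_dvd hq hf] at hne ⊢
  rw [eval_iterate_derivative_mul_of_dvd hq]
  push_cast
  have hn : (n + 1 : K) ≠ 0 := left_ne_zero_of_mul hne
  have hqa : (derivative^[n] q).eval a ≠ 0 := left_ne_zero_of_mul (right_ne_zero_of_mul hne)
  have hfa : (derivative f).eval a ≠ 0 := right_ne_zero_of_mul (right_ne_zero_of_mul hne)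
  field_simp

theorem eval_iterate_derivative_rootMultiplicity_ne_zero [CharZero K] {D : K[X]} (hD : D ≠ 0)
    (a : K) : (derivative^[D.rootMultiplicity a] D).eval a ≠ 0 := by
  rw [eval_iterate_derivative_rootMultiplicity, nsmul_eq_mul]
  exact mul_ne_zero (Nat.cast_ne_zero.2 (Nat.factorial_ne_zero _))
    (eval_divByMonic_pow_rootMultiplicity_ne_zero a hD)

/-- For a split polynomial `D`, the quotient of `D` by the monic squarefree polynomial with the
same roots. A rational function `p / D` has only simple poles exactly when `repeatedPart D`
divides `p`. -/
def repeatedPart [DecidableEq K] (D : K[X]) : K[X] :=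
  C D.leadingCoeff * ∏ a ∈ D.roots.toFinset, (X - C a) ^ (D.rootMultiplicity a - 1)

variable [DecidableEq K] {D p : K[X]}

theorem repeatedPart_mul_nodal (hD : D.Splits) :
    repeatedPart D * Lagrange.nodal D.roots.toFinset id = D := by
  conv_rhs => rw [hD.eq_prod_roots, prod_multiset_root_eq_finset_root]
  rw [repeatedPart, Lagrange.nodal, mul_assoc, ← Finset.prod_mul_distrib]
  refine congrArg _ (Finset.prod_congr rfl fun a ha => ?_)
  have hmult : D.rootMultiplicity a ≠ 0 := by
    simpa [← count_roots] using ha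
  rw [id_eq, pow_sub_one_mul hmult]

theorem X_sub_C_pow_dvd_repeatedPart {a : K} (ha : a ∈ D.roots.toFinset) :
    (X - C a) ^ (D.rootMultiplicity a - 1) ∣ repeatedPart D :=
  (Finset.dvd_prod_of_mem _ ha).mul_left _

theorem repeatedPart_dvd (hD : D ≠ 0)
    (hp : ∀ a ∈ D.roots.toFinset, (X - C a) ^ (D.rootMultiplicity a - 1) ∣ p) :
    repeatedPart D ∣ p := by
  have hlead : IsUnit (C D.leadingCoeff) := isUnit_C.2 (leadingCoeff_ne_zero.2 hD).isUnit
  refine hlead.mul_left_dvd.2 (Finset.prod_dvd_of_coprime (fun a _ b _ hab => ?_) hp)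
  exact (pairwise_coprime_X_sub_C Function.injective_id hab).pow

theorem eval_div_eval_eq_sum_roots [CharZero K] (hD : D.Splits)
    (hp : ∀ a ∈ D.roots.toFinset, (X - C a) ^ (D.rootMultiplicity a - 1) ∣ p)
    (hdeg : p.degree < D.degree) {t : K} (ht : D.eval t ≠ 0) :
    p.eval t / D.eval t = ∑ a ∈ D.roots.toFinset, (t - a)⁻¹ *
      (D.rootMultiplicity a / (derivative^[D.rootMultiplicity a] D).eval a *
        (derivative^[D.rootMultiplicity a - 1] p).eval a) := by
  have hD0 : D ≠ 0 := fun h => ht (by rw [h, eval_zero])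
  obtain ⟨g, rfl⟩ := repeatedPart_dvd hD0 hp
  have hfactor := repeatedPart_mul_nodal hD
  have hg : g.degree < D.roots.toFinset.card := by
    have hDdeg := congrArg degree hfactor
    rw [degree_mul, Lagrange.degree_nodal] at hDdeg
    rw [degree_mul, ← hDdeg] at hdeg
    exact lt_of_add_lt_add_left hdeg
  have htS : t ∉ D.roots.toFinset := fun h =>
    ht (isRoot_of_mem_roots (Multiset.mem_toFinset.1 h))
  have hDeval := congrArg (eval t) hfactor
  rw [eval_mul] at hDeval
  have hcancel : (repeatedPart D * g).eval t / D.eval t =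
      g.eval t / (Lagrange.nodal D.roots.toFinset id).eval t := by
    rw [eval_mul, ← hDeval, mul_div_mul_left _ _ (left_ne_zero_of_mul (hDeval ▸ ht))]
  rw [hcancel, eval_div_eval_nodal_eq_sum hg htS]
  refine Finset.sum_congr rfl fun a ha => congrArg _ ?_
  have hroot : D.IsRoot a := isRoot_of_mem_roots (Multiset.mem_toFinset.1 ha)
  obtain ⟨n, hn⟩ := Nat.exists_eq_add_one.2 ((rootMultiplicity_pos hD0).2 hroot)
  have hq : (X - C a) ^ n ∣ repeatedPart D := by
    simpa only [hn, Nat.add_sub_cancel] using X_sub_C_pow_dvd_repeatedPart ha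
  have hne := eval_iterate_derivative_rootMultiplicity_ne_zero hD0 a
  have hres := div_eval_iterate_derivative_mul_cancel_left hq
    (Lagrange.eval_nodal_at_node (v := id) ha) (by rwa [hfactor, ← hn]) g
  rw [hfactor] at hres
  rw [hn, Nat.add_sub_cancel, hres]

end PartialFractions

section NullSpace

variable {K m n : Type*} [Field K] [Fintype n]

theorem finrank_ker_mulVecLin (A : Matrix m n K) :
    Module.finrank K (LinearMap.ker A.mulVecLin) = Fintype.card n - A.rank := by
  have h := A.mulVecLin.finrank_range_add_finrank_ker
  rw [Module.finrank_pi] at h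
  exact (Nat.sub_eq_of_eq_add' h.symm).symm

theorem rank_updateRow_le [DecidableEq m] (A : Matrix m n K) (i : m) (b : n → K) :
    (A.updateRow i b).rank ≤ A.rank + 1 := by
  have hupdate : A.updateRow i b = A + vecMulVec (Pi.single i 1) (b - A i) := by
    ext u v
    obtain rfl | hu := eq_or_ne u i
    · simp [vecMulVec_apply]
    · simp [vecMulVec_apply, hu]
  calc (A.updateRow i b).rank
    _ = (A + vecMulVec (Pi.single i 1) (b - A i)).rank := by rw [hupdate]
    _ ≤ A.rank + (vecMulVec (Pi.single i 1) (b - A i)).rank := by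
      unfold Matrix.rank
      rw [mulVecLin_add]
      exact (Submodule.finrank_mono (LinearMap.range_add_le _ _)).trans
        (Submodule.finrank_add_le_finrank_add_finrank _ _)
    _ ≤ A.rank + 1 := Nat.add_le_add_left (rank_vecMulVec_le _ _) _

end NullSpace

section Determinant

variable {R n : Type*} [CommRing R] [Fintype n] [DecidableEq n]

theorem prod_dvd_det_of_dvd_col {A : Matrix n n R} {d : n → R} (hd : ∀ i j, d j ∣ A i j) :
    ∏ j, d j ∣ A.det := by
  choose B hB using hd
  have hA : A = of fun i j => d j * B i j := by ext i j; exact hB i j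
  exact ⟨det B, by rw [hA]; exact det_mul_row d B⟩

theorem mul_adjugate_apply_eq_det_updateRow {o : Type*} (V : Matrix o n R) (W : Matrix n n R)
    (i : o) (j : n) : (V * W.adjugate) i j = (W.updateRow j (V i)).det := by
  rw [← cramer_transpose_apply, cramer_eq_adjugate_mulVec, ← adjugate_transpose,
    mulVec_transpose]
  rfl

theorem natDegree_det_le_sum {A : Matrix n n R[X]} {d : n → ℕ}
    (hA : ∀ i j, (A i j).natDegree ≤ d i) : A.det.natDegree ≤ ∑ i, d i := by
  rw [det_apply]
  refine natDegree_sum_le_of_forall_le _ _ fun σ _ => (natDegree_smul_le _ _).trans ?_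
  rw [← Equiv.sum_comp σ d]
  exact (natDegree_prod_le _ _).trans (Finset.sum_le_sum fun i _ => hA _ _)

theorem natDegree_det_updateRow_lt {W : Matrix n n R[X]} {m : ℕ}
    (hW : ∀ i j, (W i j).natDegree ≤ m) (i : n) {b : n → R[X]}
    (hb : ∀ j, (b j).natDegree < m) :
    (W.updateRow i b).det.natDegree < Fintype.card n * m := by
  have hm : m - 1 < m := Nat.sub_one_lt_of_lt (hb i)
  calc (W.updateRow i b).det.natDegree
    _ ≤ ∑ u, Function.update (fun _ => m) i (m - 1) u := natDegree_det_le_sum fun u j => by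
      obtain rfl | hu := eq_or_ne u i
      · simpa using Nat.le_sub_one_of_lt (hb j)
      · simpa [hu] using hW u j
    _ < ∑ _u : n, m := Finset.sum_lt_sum
      (fun u _ => by obtain rfl | hu := eq_or_ne u i <;> simp [*])
      ⟨i, Finset.mem_univ i, by simpa using hm⟩
    _ = Fintype.card n * m := by simp

theorem coeff_det_card_mul {W : Matrix n n R[X]} {m : ℕ} (hW : ∀ i j, (W i j).natDegree ≤ m) :
    W.det.coeff (Fintype.card n * m) = (of fun i j => (W i j).coeff m).det := by
  simp only [det_apply, finsetSum_coeff, coeff_smul, of_apply]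
  exact Finset.sum_congr rfl fun σ _ => congrArg _ <|
    coeff_prod_of_natDegree_le _ _ _ fun i _ => hW _ _

end Determinant

section Divisibility

variable {K n : Type*} [Field K] [Fintype n] [DecidableEq n] (W : Matrix n n K[X]) (a : K)

theorem X_sub_C_pow_dvd_det :
    (X - C a) ^ (Fintype.card n - (W.map (eval a)).rank) ∣ W.det := by
  obtain ⟨P, Q, e, hP, hQ, hPWQ⟩ := exists_rank_normal_form (W.map (eval a))
  set d : n → K[X] := fun j => Sum.elim (fun _ => 1) (fun _ => X - C a) (e j)
  have hprod : ∏ j, d j = (X - C a) ^ (Fintype.card n - (W.map (eval a)).rank) := by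
    rw [e.prod_comp, Fintype.prod_sum_type]
    simp
  have heval : (P.map C * W * Q.map C).map (eval a) = P * W.map (eval a) * Q := by
    simp only [← coe_evalRingHom, Matrix.map_mul, Matrix.map_map]
    simp [Function.comp_def]
  have hcol : ∀ i j, d j ∣ (P.map C * W * Q.map C) i j := by
    intro i j
    have hij := congrFun₂ (heval.trans hPWQ) i j
    rcases hej : e j with j' | j'
    · simp [d, hej]
    · simp only [d, hej, Sum.elim_inr]
      rw [dvd_iff_isRoot]
      refine hij.trans ?_
      rcases hei : e i <;> simp [hei, hej]
  have hdet := prod_dvd_det_of_dvd_col hcol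
  have hunit : ∀ {A : Matrix n n K}, IsUnit A → IsUnit (A.map C).det := fun hA => by
    rw [← RingHom.mapMatrix_apply, ← RingHom.map_det]
    exact ((isUnit_iff_isUnit_det _).1 hA).map C
  rwa [hprod, det_mul, det_mul, (hunit hQ).dvd_mul_right, (hunit hP).dvd_mul_left] at hdet

theorem X_sub_C_pow_dvd_det_updateRow (i : n) (b : n → K[X]) :
    (X - C a) ^ (Fintype.card n - (W.map (eval a)).rank - 1) ∣ (W.updateRow i b).det := by
  refine (pow_dvd_pow _ ?_).trans (X_sub_C_pow_dvd_det _ a)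
  have hrank := rank_updateRow_le (W.map (eval a)) i (eval a ∘ b)
  rw [← map_updateRow] at hrank
  omega

end Divisibility

theorem sum_roots_toFinset_eq_sum {K ι M : Type*} [Field K] [DecidableEq K] [Fintype ι]
    [AddCommMonoid M] {D : K[X]} (hD : D ≠ 0) {x : ι → K} (hinj : Function.Injective x)
    (hzeros : ∀ z, D.eval z = 0 ↔ ∃ k, z = x k) (f : K → M) :
    ∑ a ∈ D.roots.toFinset, f a = ∑ k, f (x k) := by
  have hroots : D.roots.toFinset = Finset.univ.map ⟨x, hinj⟩ := by
    ext z
    simp [hD, hzeros, eq_comm]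
  rw [hroots, Finset.sum_map]
  rfl

theorem map_eval_mul_inv_apply {K n o : Type*} [Field K] [Fintype n] [DecidableEq n]
    (V : Matrix o n K[X]) (W : Matrix n n K[X]) (t : K) (i : o) (j : n) :
    (V.map (eval t) * (W.map (eval t))⁻¹) i j =
      (W.updateRow j (V i)).det.eval t / W.det.eval t := by
  have hdet (A : Matrix n n K[X]) : (A.map (eval t)).det = A.det.eval t :=
    ((evalRingHom t).map_det A).symm
  rw [inv_def, Ring.inverse_eq_inv', Matrix.mul_smul, Matrix.smul_apply, smul_eq_mul,
    inv_mul_eq_div, mul_adjugate_apply_eq_det_updateRow, hdet W, ← hdet (W.updateRow j (V i)),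
    map_updateRow]
  rfl

theorem statement17_general {K n o ι : Type*} [Field K] [CharZero K] [Fintype n] [DecidableEq n]
    [Fintype ι] {m : ℕ} {Vm : Matrix n n K[X]} (hdeg : ∀ i j, (Vm i j).natDegree ≤ m)
    (hlead : (of fun i j => (Vm i j).coeff m).det ≠ 0) (hsplits : Vm.det.Splits)
    {x : ι → K} (hinj : Function.Injective x) {l : ι → ℕ}
    (hzeros : ∀ z, Vm.det.eval z = 0 ↔ ∃ k, z = x k)
    (hmult : ∀ k, Vm.det.rootMultiplicity (x k) = l k)
    (hker : ∀ k, Module.finrank K (LinearMap.ker (Vm.map (eval (x k))).mulVecLin) = l k)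
    {V : Matrix o n K[X]} (hV : ∀ i j, (V i j).natDegree < m) {t : K} (ht : ∀ k, t ≠ x k) :
    V.map (eval t) * (Vm.map (eval t))⁻¹ = ∑ k, (t - x k)⁻¹ •
      ((l k / (derivative^[l k] Vm.det).eval (x k)) •
        (V.map (eval (x k)) *
          Vm.adjugate.map fun q => (derivative^[l k - 1] q).eval (x k))) := by
  classical
  have hcoeff : Vm.det.coeff (Fintype.card n * m) ≠ 0 := by rwa [coeff_det_card_mul hdeg]
  have hD : Vm.det ≠ 0 := fun h => hcoeff (by rw [h, coeff_zero])
  have hdvd : ∀ k i b, (X - C (x k)) ^ (l k - 1) ∣ (Vm.updateRow i b).det := fun k i b => by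
    rw [← hker k, finrank_ker_mulVecLin]
    exact X_sub_C_pow_dvd_det_updateRow Vm (x k) i b
  have hzero : Vm.det.eval t ≠ 0 := fun h => ((hzeros t).1 h).elim ht
  have hdvdAdj : ∀ k i j, (X - C (x k)) ^ (l k - 1) ∣ Vm.adjugate i j := fun k i j => by
    rw [adjugate_apply]
    exact hdvd k j _
  ext i j
  have hpoles : ∀ a ∈ Vm.det.roots.toFinset,
      (X - C a) ^ (Vm.det.rootMultiplicity a - 1) ∣ (Vm.updateRow j (V i)).det := fun a ha => by
    obtain ⟨k, rfl⟩ := (hzeros a).1 (isRoot_of_mem_roots (Multiset.mem_toFinset.1 ha))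
    rw [hmult]
    exact hdvd k j (V i)
  have hproper : (Vm.updateRow j (V i)).det.degree < Vm.det.degree :=
    degree_lt_degree ((natDegree_det_updateRow_lt hdeg j (hV i)).trans_le
      (le_natDegree_of_ne_zero hcoeff))
  rw [map_eval_mul_inv_apply, eval_div_eval_eq_sum_roots hsplits hpoles hproper hzero,
    sum_roots_toFinset_eq_sum hD hinj hzeros, Matrix.sum_apply]
  refine Finset.sum_congr rfl fun k _ => ?_
  rw [← map_eval_iterate_derivative_mul_of_dvd V (hdvdAdj k), Matrix.smul_apply,
    Matrix.smul_apply, map_apply, mul_adjugate_apply_eq_det_updateRow, hmult, smul_eq_mul,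
    smul_eq_mul]

theorem statement17
    (N : ℕ) (hN : 0 < N) (m : ℕ) (hm : 1 ≤ m)
    (Vm : Matrix (Fin N) (Fin N) (Polynomial ℂ))
    (hdeg : ∀ i j, (Vm i j).natDegree ≤ m)
    (hlead : IsUnit (Matrix.of fun i j : Fin N => (Vm i j).coeff m).det)
    -- the distinct zeros of det V_m, with multiplicities l k
    (s : ℕ) (x : Fin s → ℂ) (hinj : Function.Injective x) (l : Fin s → ℕ)
    (hzeros : ∀ z : ℂ, (Vm.det).eval z = 0 ↔ ∃ k, z = x k)
    (hmult : ∀ k, (Vm.det).rootMultiplicity (x k) = l k)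
    -- the left and right null spaces of V_m(x k) both have dimension l k
    (hdimL : ∀ k, Module.finrank ℂ (LinearMap.ker (evalMat Vm (x k)).vecMulLinear) = l k)
    (hdimR : ∀ k, Module.finrank ℂ (LinearMap.ker (evalMat Vm (x k)).mulVecLin) = l k) :
    ∀ V : Matrix (Fin N) (Fin N) (Polynomial ℂ), (∀ i j, (V i j).natDegree ≤ m - 1) →
      ∀ t : ℂ, (∀ k, t ≠ x k) →
        evalMat V t * (evalMat Vm t)⁻¹
          = ∑ k : Fin s, (t - x k)⁻¹ •
              (((l k : ℂ) / Polynomial.eval (x k) (iterDeriv (l k) Vm.det)) •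
                (evalMat V (x k) * adjDer Vm (l k - 1) (x k))) := by
  intro V hV t ht
  exact statement17_general hdeg hlead.ne_zero (IsAlgClosed.splits _) hinj hzeros hmult hdimR
    (fun i j => (hV i j).trans_lt (Nat.sub_one_lt_of_lt hm)) ht
end
end
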